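/- Reverse circulant link structure: for the link function L(i,j) = (i+j) mod n on {1,...,n}^2, the matrices RC with entries RC(i,j) = x(L(i,j)) half commute in the sense that for any three reverse circulant matrices A, B, C (with arbitrary input sequences, same n), ABC = CBA. -/

import Mathlib

/-- Reverse circulant matrices half commute: if `A, B, C` are `n × n`
matrices (indices taken mod `n`) whose entries depend only on `(i + j) mod n`,
i.e. `A i j = a (i + j)`, `B i j = b (i + j)`, `C i j = c (i + j)` for some
input sequences `a, b, c`, then `A * B * C = C * B * A`. -/
theorem reverse_circulant_half_commute {n : ℕ} [NeZero n] {R : Type*}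
    [CommRing R] (A B C : Matrix (ZMod n) (ZMod n) R)
    (a b c : ZMod n → R)
    (hA : ∀ i j, A i j = a (i + j))
    (hB : ∀ i j, B i j = b (i + j))
    (hC : ∀ i j, C i j = c (i + j)) :
    A * B * C = C * B * A := by
  ext i l
  simp only [Matrix.mul_apply, hA, hB, hC, Finset.sum_mul]
  conv_rhs => rw [Finset.sum_comm]
  refine Fintype.sum_equiv (Equiv.addRight (l - i)) _ _ fun k => ?_
  refine Fintype.sum_equiv (Equiv.addRight (i - l)) _ _ fun j => ?_
  simp only [Equiv.coe_addRight]
  have h1 : i + (k + (l - i)) = k + l := by ring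
  have h2 : k + (l - i) + (j + (i - l)) = j + k := by ring
  have h3 : j + (i - l) + l = i + j := by ring
  rw [h1, h2, h3]
  ring
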